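/- (Explicit Iwasawa factorization and Sym formula for the cylinder.) Let A = [[0,1],[1,0]] and z = x+iy ∈ ℂ. For every λ with |λ| = 1: (i) exp(zλ⁻¹A) = exp((zλ⁻¹ - z̄λ)A) · exp(z̄λA); (ii) F̂(z,λ) := exp((zλ⁻¹ - z̄λ)A) lies in SU(2); (iii) the second factor B̂(z,λ) = exp(z̄λA) extends holomorphically in λ to all of ℂ with B̂(z,0) = I; and (iv) for every real H ≠ 0, the Sym–Bobenko formula at λ = 1 gives S₁(F̂(z,·)) = -(1/(2H)) ( 4x·e₁ + sin(4y)·e₂ + cos(4y)·e₃ ), a round cylinder (a conformal immersion of constant mean curvature H). -/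

import Mathlib

open Matrix Complex

noncomputable section

attribute [local instance] Matrix.linftyOpNormedAddCommGroup Matrix.linftyOpNormedSpace
  Matrix.linftyOpNormedRing Matrix.linftyOpNormedAlgebra

/-- The space of 2×2 complex matrices. -/
abbrev M2 : Type := Matrix (Fin 2) (Fin 2) ℂ

/-- Basis vector `e₁` of su(2). -/
def e1 : M2 := !![0, -Complex.I; -Complex.I, 0]

/-- Basis vector `e₂` of su(2). -/
def e2 : M2 := !![0, 1; -1, 0]

/-- Basis vector `e₃` of su(2). -/
def e3 : M2 := !![Complex.I, 0; 0, -Complex.I]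

/-- The inner product `⟨X,Y⟩ = -(1/2) tr (XY)` identifying su(2) with E³. -/
def ip (X Y : M2) : ℂ := -(1/2 : ℂ) * (X * Y).trace

/-- Partial derivative in the `x`-direction. -/
def px (f : ℂ → M2) (z : ℂ) : M2 := fderiv ℝ f z 1

/-- Partial derivative in the `y`-direction. -/
def py (f : ℂ → M2) (z : ℂ) : M2 := fderiv ℝ f z Complex.I

/-- Wirtinger derivative `∂_z = (1/2)(∂_x - i ∂_y)`. -/
def dz (f : ℂ → M2) (z : ℂ) : M2 := (2:ℂ)⁻¹ • (px f z - Complex.I • py f z)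

/-- Wirtinger derivative `∂_z̄ = (1/2)(∂_x + i ∂_y)`. -/
def dzb (f : ℂ → M2) (z : ℂ) : M2 := (2:ℂ)⁻¹ • (px f z + Complex.I • py f z)

/-- `x`-derivative of a real-valued function on ℂ. -/
def pxR (u : ℂ → ℝ) (z : ℂ) : ℝ := fderiv ℝ u z 1

/-- `y`-derivative of a real-valued function on ℂ. -/
def pyR (u : ℂ → ℝ) (z : ℂ) : ℝ := fderiv ℝ u z Complex.I

/-- Wirtinger derivative `u_z` of a real-valued function. -/
def dzR (u : ℂ → ℝ) (z : ℂ) : ℂ := (2:ℂ)⁻¹ * ((pxR u z : ℂ) - Complex.I * (pyR u z : ℂ))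

/-- Wirtinger derivative `u_z̄` of a real-valued function. -/
def dzbR (u : ℂ → ℝ) (z : ℂ) : ℂ := (2:ℂ)⁻¹ * ((pxR u z : ℂ) + Complex.I * (pyR u z : ℂ))

/-- `x`-derivative of a complex-valued function on ℂ. -/
def pxC (q : ℂ → ℂ) (z : ℂ) : ℂ := fderiv ℝ q z 1

/-- `y`-derivative of a complex-valued function on ℂ. -/
def pyC (q : ℂ → ℂ) (z : ℂ) : ℂ := fderiv ℝ q z Complex.I

/-- Wirtinger derivative `∂_z` of a complex-valued function. -/
def dzC (q : ℂ → ℂ) (z : ℂ) : ℂ := (2:ℂ)⁻¹ * (pxC q z - Complex.I * pyC q z)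

/-- Wirtinger derivative `∂_z̄` of a complex-valued function. -/
def dzbC (q : ℂ → ℂ) (z : ℂ) : ℂ := (2:ℂ)⁻¹ * (pxC q z + Complex.I * pyC q z)

/-- The Sym–Bobenko formula `S_{λ₀}(G) = -(1/(2H)) (G e₃ G⁻¹ + 2iλ ∂_λ G · G⁻¹)` at `λ = λ₀`. -/
def symB (H : ℝ) (G : ℂ → M2) (l : ℂ) : M2 :=
  (-(2 * (H : ℂ))⁻¹) • (G l * e3 * (G l)⁻¹ + (2 * Complex.I * l) • (fderiv ℂ G l 1 * (G l)⁻¹))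

/-- The off-diagonal matrix `A = [[0,1],[1,0]]`. -/
def cylA : M2 := !![0, 1; 1, 0]

/-- The unitary factor `F̂(z,λ) = exp((zλ⁻¹ - z̄λ)A)` of the cylinder frame. -/
def cylF (z l : ℂ) : M2 := NormedSpace.exp (((z * l⁻¹ - (starRingEnd ℂ) z * l)) • cylA)

/-- The positive factor `B̂(z,λ) = exp(z̄λA)` of the cylinder frame. -/
def cylB (z l : ℂ) : M2 := NormedSpace.exp (((starRingEnd ℂ) z * l) • cylA)

/-!
Since `A² = 1`, `exp (cA) = cosh c + sinh c · A`. The basis vector `e₁` is a multiple of `A`, while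
`e₂` and `e₃` anticommute with `A`, so conjugation by `exp (cA)` fixes `e₁` and acts on `e₂`, `e₃`
as left multiplication by `exp (2cA)`. At `λ = 1` we have `c = 2iy`, so `F̂` rotates the
`e₂e₃`-plane by the angle `4y`; this is the circular part of the Sym–Bobenko formula, and
`∂_λ F̂ · F̂⁻¹ = -2xA` is the axial part.

The first derivatives of the resulting surface are `-2/H` times `F̂ e₁ F̂⁻¹` and `F̂ e₂ F̂⁻¹`, and
its Laplacian is `8/H` times `F̂ e₃ F̂⁻¹`. As conjugation preserves the inner product, the metric is
`4/H²` times the flat one and the mean curvature is `H`.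
-/

section Exponential

variable {𝔸 : Type*} [NormedRing 𝔸] [CompleteSpace 𝔸]

lemma exp_smul_of_mul_self_eq_one [NormedAlgebra ℂ 𝔸] {a : 𝔸} (ha : a * a = 1) (c : ℂ) :
    NormedSpace.exp (c • a) = cosh c • (1 : 𝔸) + sinh c • a := by
  have pow_even (k : ℕ) : a ^ (2 * k) = 1 := by rw [pow_mul, sq, ha, one_pow]
  refine (NormedSpace.exp_series_hasSum_exp' (𝕂 := ℂ) (c • a)).unique (HasSum.even_add_odd ?_ ?_)
  · refine ((hasSum_cosh c).smul_const (1 : 𝔸)).congr_fun fun k => ?_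
    rw [smul_pow, pow_even, smul_smul, div_eq_inv_mul]
  · refine ((hasSum_sinh c).smul_const a).congr_fun fun k => ?_
    rw [smul_pow, pow_succ a, pow_even, one_mul, smul_smul, div_eq_inv_mul]

lemma exp_mul_mul_exp_neg_of_semiconjBy_neg [NormedAlgebra ℚ 𝔸] {a x : 𝔸}
    (h : SemiconjBy x a (-a)) :
    NormedSpace.exp a * x * NormedSpace.exp (-a) = NormedSpace.exp (a + a) * x := by
  have hx : x * NormedSpace.exp (-a) = NormedSpace.exp a * x := by
    simpa using h.neg_right.exp_right.eq
  rw [mul_assoc, hx, ← mul_assoc, ← NormedSpace.exp_add_of_commute (Commute.refl a)]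

lemma hasDerivAt_exp_comp_smul {𝕂 : Type*} [RCLike 𝕂] [NormedAlgebra 𝕂 𝔸] {f : 𝕂 → 𝕂} {f' l : 𝕂}
    (hf : HasDerivAt f f' l) (a : 𝔸) :
    HasDerivAt (fun l => NormedSpace.exp (f l • a)) (f' • (a * NormedSpace.exp (f l • a))) l :=
  (hasDerivAt_exp_smul_const' a (f l)).scomp l hf

lemma contDiff_normedSpace_exp {𝕂 : Type*} [RCLike 𝕂] [NormedAlgebra 𝕂 𝔸] {n : WithTop ℕ∞} :
    ContDiff 𝕂 n (NormedSpace.exp : 𝔸 → 𝔸) :=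
  contDiff_iff_contDiffAt.mpr fun a => (NormedSpace.exp_analytic a).contDiffAt

end Exponential

section MatrixConjugation

variable {n R : Type*} [Fintype n] [DecidableEq n] [CommRing R]

lemma mul_mul_inv_of_semiconjBy {F X Y : Matrix n n R} (hF : IsUnit F.det)
    (h : SemiconjBy F X Y) : F * X * F⁻¹ = Y := by
  rw [h.eq, mul_nonsing_inv_cancel_right _ _ hF]

lemma mul_conj_eq_conj_conj (F C X : Matrix n n R) :
    F * C * X * (F * C)⁻¹ = F * (C * X * C⁻¹) * F⁻¹ := by
  simp only [Matrix.mul_inv_rev, mul_assoc]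

lemma mem_specialUnitaryGroup_iff_conjTranspose_mul_self [StarRing R] {F : Matrix n n R} :
    F ∈ specialUnitaryGroup n R ↔ Fᴴ * F = 1 ∧ F.det = 1 := by
  rw [mem_specialUnitaryGroup_iff, mem_unitaryGroup_iff', star_eq_conjTranspose]

lemma exp_mem_unitaryGroup_of_conjTranspose_eq_neg {X : Matrix n n ℂ} (hX : Xᴴ = -X) :
    NormedSpace.exp X ∈ unitaryGroup n ℂ := by
  rw [mem_unitaryGroup_iff', star_eq_conjTranspose, ← Matrix.exp_conjTranspose, hX,
    ← Matrix.exp_add_of_commute _ _ (Commute.refl X).neg_left, neg_add_cancel,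
    NormedSpace.exp_zero]

end MatrixConjugation

section InnerProduct

lemma ip_smul_left (r : ℂ) (X Y : M2) : ip (r • X) Y = r * ip X Y := by
  rw [ip, ip, smul_mul_assoc, trace_smul, smul_eq_mul, mul_left_comm]

lemma ip_smul_right (r : ℂ) (X Y : M2) : ip X (r • Y) = r * ip X Y := by
  rw [ip, ip, mul_smul_comm, trace_smul, smul_eq_mul, mul_left_comm]

lemma ip_conj {F : M2} (hF : IsUnit F.det) (X Y : M2) :
    ip (F * X * F⁻¹) (F * Y * F⁻¹) = ip X Y := by
  have hprod : F * X * F⁻¹ * (F * Y * F⁻¹) = F * (X * Y) * F⁻¹ := by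
    simp only [mul_assoc, nonsing_inv_mul_cancel_left _ _ hF]
  rw [ip, ip, hprod, trace_mul_comm, nonsing_inv_mul_cancel_left _ _ hF]

lemma ip_e1_e1 : ip e1 e1 = 1 := by
  norm_num [ip, e1, trace_fin_two]

lemma ip_e2_e2 : ip e2 e2 = 1 := by
  norm_num [ip, e2, trace_fin_two]

lemma ip_e3_e3 : ip e3 e3 = 1 := by
  norm_num [ip, e3, trace_fin_two]

lemma ip_e1_e2 : ip e1 e2 = 0 := by
  simp [ip, e1, e2, trace_fin_two]

lemma conjTranspose_real_combination (a b c : ℝ) :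
    ((a : ℂ) • e1 + (b : ℂ) • e2 + (c : ℂ) • e3)ᴴ
      = -((a : ℂ) • e1 + (b : ℂ) • e2 + (c : ℂ) • e3) := by
  ext i j
  fin_cases i <;> fin_cases j <;> simp [e1, e2, e3, add_comm]

lemma trace_combination (a b c : ℂ) : (a • e1 + b • e2 + c • e3).trace = 0 := by
  simp [e1, e2, e3, trace_fin_two]

end InnerProduct

section PartialDerivatives

variable {E : Type*} [NormedAddCommGroup E]

lemma hasFDerivAt_re_add_im [NormedSpace ℝ E] {g h : ℝ → E} {g' h' : E} {z : ℂ}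
    (hg : HasDerivAt g g' z.re) (hh : HasDerivAt h h' z.im) :
    HasFDerivAt (fun w : ℂ => g w.re + h w.im)
      (.toSpanSingleton ℝ g' ∘L reCLM + .toSpanSingleton ℝ h' ∘L imCLM) z :=
  (hg.hasFDerivAt.comp z reCLM.hasFDerivAt).add (hh.hasFDerivAt.comp z imCLM.hasFDerivAt)

lemma px_re_add_im {g h : ℝ → M2} {g' h' : M2} {z : ℂ} (hg : HasDerivAt g g' z.re)
    (hh : HasDerivAt h h' z.im) : px (fun w => g w.re + h w.im) z = g' := by
  calc px (fun w => g w.re + h w.im) z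
    _ = (.toSpanSingleton ℝ g' ∘L reCLM + .toSpanSingleton ℝ h' ∘L imCLM : ℂ →L[ℝ] M2) 1 :=
      DFunLike.congr_fun (hasFDerivAt_re_add_im hg hh).fderiv 1
    _ = g' := by simp

lemma py_re_add_im {g h : ℝ → M2} {g' h' : M2} {z : ℂ} (hg : HasDerivAt g g' z.re)
    (hh : HasDerivAt h h' z.im) : py (fun w => g w.re + h w.im) z = h' := by
  calc py (fun w => g w.re + h w.im) z
    _ = (.toSpanSingleton ℝ g' ∘L reCLM + .toSpanSingleton ℝ h' ∘L imCLM : ℂ →L[ℝ] M2) I :=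
      DFunLike.congr_fun (hasFDerivAt_re_add_im hg hh).fderiv I
    _ = h' := by simp

lemma hasDerivAt_const_smul_comp_mul_left [NormedSpace ℂ E] {f : ℝ → E} {f' : E} {k t : ℝ}
    (hf : HasDerivAt f f' (k * t)) (c : ℂ) :
    HasDerivAt (fun y => c • f (k * y)) ((c * k) • f') t := by
  have h := (hf.scomp t ((hasDerivAt_id t).const_mul k)).const_smul c
  rwa [mul_one, ← coe_smul, smul_smul] at h

end PartialDerivatives

section Factorization

lemma cylA_mul_cylA : cylA * cylA = 1 := by
  simp [cylA, one_fin_two]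

lemma e1_eq_smul_cylA : e1 = (-I) • cylA := by
  simp [e1, cylA]

lemma cylA_mul_e2 : cylA * e2 = I • e3 := by
  simp [cylA, e2, e3]

lemma cylA_mul_e3 : cylA * e3 = (-I) • e2 := by
  simp [cylA, e2, e3]

lemma semiconjBy_e2_cylA : SemiconjBy e2 cylA (-cylA) := by
  simp [SemiconjBy, cylA, e2]

lemma semiconjBy_e3_cylA : SemiconjBy e3 cylA (-cylA) := by
  simp [SemiconjBy, cylA, e3]

lemma conjTranspose_cylA : cylAᴴ = cylA := by
  ext i j
  fin_cases i <;> fin_cases j <;> simp [cylA]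

lemma exp_smul_cylA (c : ℂ) :
    NormedSpace.exp (c • cylA) = cosh c • (1 : M2) + sinh c • cylA :=
  exp_smul_of_mul_self_eq_one cylA_mul_cylA c

lemma det_exp_smul_cylA (c : ℂ) : (NormedSpace.exp (c • cylA)).det = 1 := by
  rw [exp_smul_cylA, ← cosh_sq_sub_sinh_sq c]
  simp [det_fin_two, cylA, sq]

lemma exp_smul_cylA_eq_cylF_mul_cylB (z l : ℂ) :
    NormedSpace.exp ((z * l⁻¹) • cylA) = cylF z l * cylB z l := by
  have hcomm (a b : ℂ) : Commute (a • cylA) (b • cylA) :=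
    ((Commute.refl cylA).smul_left a).smul_right b
  rw [cylF, cylB, ← Matrix.exp_add_of_commute _ _ (hcomm _ _), ← add_smul, sub_add_cancel]

lemma cylF_mem_specialUnitaryGroup (z : ℂ) {l : ℂ} (hl : ‖l‖ = 1) :
    cylF z l ∈ specialUnitaryGroup (Fin 2) ℂ := by
  refine mem_specialUnitaryGroup_iff.mpr
    ⟨exp_mem_unitaryGroup_of_conjTranspose_eq_neg ?_, det_exp_smul_cylA _⟩
  rw [conjTranspose_smul, conjTranspose_cylA, inv_eq_conj hl, ← neg_smul]
  simp

lemma isUnit_det_cylF (z l : ℂ) : IsUnit (cylF z l).det := by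
  rw [cylF, det_exp_smul_cylA]
  exact isUnit_one

lemma differentiable_cylB (z : ℂ) : Differentiable ℂ (cylB z) := fun l =>
  (hasDerivAt_exp_comp_smul ((hasDerivAt_id l).const_mul _) cylA).differentiableAt

lemma cylB_zero (z : ℂ) : cylB z 0 = 1 := by
  rw [cylB, mul_zero, zero_smul, NormedSpace.exp_zero]

end Factorization

section SymBobenko

/-- The unit vector of the `e₂e₃`-plane obtained by rotating `e₃` by the angle `t`: the normal of
the cylinder. -/
def circleNormal (t : ℝ) : M2 := (Real.sin t : ℂ) • e2 + (Real.cos t : ℂ) • e3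

/-- The unit vector of the `e₂e₃`-plane obtained by rotating `e₂` by the angle `t`: the tangent of
the cylinder orthogonal to its axis. -/
def circleTangent (t : ℝ) : M2 := (Real.cos t : ℂ) • e2 - (Real.sin t : ℂ) • e3

lemma hasDerivAt_circleNormal (t : ℝ) : HasDerivAt circleNormal (circleTangent t) t := by
  have h := ((Real.hasDerivAt_sin t).ofReal_comp.smul_const e2).add
    ((Real.hasDerivAt_cos t).ofReal_comp.smul_const e3)
  rwa [ofReal_neg, neg_smul, ← sub_eq_add_neg] at h

lemma hasDerivAt_circleTangent (t : ℝ) : HasDerivAt circleTangent (-circleNormal t) t := by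
  have h := ((Real.hasDerivAt_cos t).ofReal_comp.smul_const e2).sub
    ((Real.hasDerivAt_sin t).ofReal_comp.smul_const e3)
  rwa [ofReal_neg, neg_smul, ← neg_add'] at h

lemma cylF_one (z : ℂ) : cylF z 1 = NormedSpace.exp ((2 * z.im * I) • cylA) := by
  rw [cylF, inv_one, mul_one, mul_one, sub_conj]
  norm_cast

lemma cylF_one_conj_of_semiconjBy_neg (z : ℂ) {X : M2} (hX : SemiconjBy X cylA (-cylA)) :
    cylF z 1 * X * (cylF z 1)⁻¹
      = (Real.cos (4 * z.im) : ℂ) • X + (Real.sin (4 * z.im) * I) • (cylA * X) := by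
  have hconj (c : ℂ) : NormedSpace.exp (c • cylA) * X * NormedSpace.exp (-(c • cylA))
      = NormedSpace.exp (c • cylA + c • cylA) * X := by
    refine exp_mul_mul_exp_neg_of_semiconjBy_neg ?_
    rw [← smul_neg]
    exact hX.smul_right c
  have hangle : (2 * z.im * I + 2 * z.im * I : ℂ) = (4 * z.im : ℝ) * I := by
    push_cast; ring
  rw [cylF_one, ← Matrix.exp_neg, hconj, ← add_smul, hangle, exp_smul_cylA, cosh_mul_I,
    sinh_mul_I, ofReal_cos, ofReal_sin, add_mul, smul_mul_assoc, one_mul, smul_mul_assoc]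

lemma cylF_one_conj_e1 (z : ℂ) : cylF z 1 * e1 * (cylF z 1)⁻¹ = e1 := by
  refine mul_mul_inv_of_semiconjBy (isUnit_det_cylF z 1) ?_
  rw [e1_eq_smul_cylA]
  exact (((Commute.refl cylA).smul_left _).exp_left).smul_right _

lemma cylF_one_conj_e2 (z : ℂ) :
    cylF z 1 * e2 * (cylF z 1)⁻¹ = circleTangent (4 * z.im) := by
  rw [cylF_one_conj_of_semiconjBy_neg z semiconjBy_e2_cylA, cylA_mul_e2, smul_smul, mul_assoc,
    I_mul_I, mul_neg_one, neg_smul, ← sub_eq_add_neg, circleTangent]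

lemma cylF_one_conj_e3 (z : ℂ) :
    cylF z 1 * e3 * (cylF z 1)⁻¹ = circleNormal (4 * z.im) := by
  rw [cylF_one_conj_of_semiconjBy_neg z semiconjBy_e3_cylA, cylA_mul_e3, smul_smul, mul_assoc,
    mul_neg, I_mul_I, neg_neg, mul_one, add_comm, circleNormal]

lemma fderiv_cylF_one_mul_inv (z : ℂ) :
    fderiv ℂ (cylF z) 1 1 * (cylF z 1)⁻¹ = (-(2 * z.re) : ℂ) • cylA := by
  have hphase : HasDerivAt (fun l : ℂ => z * l⁻¹ - (starRingEnd ℂ) z * l) (-(2 * z.re)) 1 := by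
    have h := ((hasDerivAt_inv (one_ne_zero (α := ℂ))).const_mul z).sub
      ((hasDerivAt_id (1 : ℂ)).const_mul ((starRingEnd ℂ) z))
    have hz : z * -((1 : ℂ) ^ 2)⁻¹ - (starRingEnd ℂ) z * 1 = -(2 * z.re) := by
      have := add_conj z
      push_cast at this
      linear_combination -this
    rwa [hz] at h
  have hF : HasDerivAt (cylF z) ((-(2 * z.re) : ℂ) • (cylA * cylF z 1)) 1 :=
    hasDerivAt_exp_comp_smul hphase cylA
  have hfderiv : fderiv ℂ (cylF z) 1 1 = (-(2 * z.re) : ℂ) • (cylA * cylF z 1) := hF.deriv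
  rw [hfderiv, smul_mul_assoc, mul_nonsing_inv_cancel_right _ _ (isUnit_det_cylF z 1)]

lemma symB_cylF_one (H : ℝ) (z : ℂ) :
    symB H (cylF z) 1 = (-(2 * (H : ℂ))⁻¹) •
      (((4 * z.re : ℝ) : ℂ) • e1 + ((Real.sin (4 * z.im) : ℝ) : ℂ) • e2 +
        ((Real.cos (4 * z.im) : ℝ) : ℂ) • e3) := by
  have haxial : (2 * I * 1) • (-(2 * z.re) : ℂ) • cylA = ((4 * z.re : ℝ) : ℂ) • e1 := by
    rw [e1_eq_smul_cylA, smul_smul, smul_smul]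
    push_cast
    ring_nf
  rw [symB, cylF_one_conj_e3, fderiv_cylF_one_mul_inv, haxial, circleNormal, add_comm, add_assoc]

end SymBobenko

section Surface

/-- The surface given by the Sym–Bobenko formula at `λ = 1`. -/
def cylSurface (H : ℝ) (z : ℂ) : M2 := symB H (cylF z) 1

lemma cylSurface_eq_re_add_im (H : ℝ) : cylSurface H = fun w : ℂ =>
    (w.re : ℝ) • (-(2 / H : ℂ)) • e1 + (-(2 * H : ℂ)⁻¹) • circleNormal (4 * w.im) := by
  funext w
  rw [cylSurface, symB_cylF_one, circleNormal, add_assoc, smul_add, smul_smul, ← coe_smul,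
    smul_smul]
  congr 2
  push_cast
  ring

lemma conjTranspose_cylSurface (H : ℝ) (z : ℂ) : (cylSurface H z)ᴴ = -cylSurface H z := by
  have hreal : star (-(2 * (H : ℂ))⁻¹) = -(2 * (H : ℂ))⁻¹ := by simp
  rw [cylSurface, symB_cylF_one, conjTranspose_smul, conjTranspose_real_combination, hreal,
    smul_neg]

lemma trace_cylSurface (H : ℝ) (z : ℂ) : (cylSurface H z).trace = 0 := by
  rw [cylSurface, symB_cylF_one, trace_smul, trace_combination, smul_zero]

lemma contDiff_circleNormal {n : WithTop ℕ∞} : ContDiff ℝ n circleNormal :=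
  ((ofRealCLM.contDiff.comp Real.contDiff_sin).smul contDiff_const).add
    ((ofRealCLM.contDiff.comp Real.contDiff_cos).smul contDiff_const)

lemma contDiff_cylSurface (H : ℝ) {n : WithTop ℕ∞} : ContDiff ℝ n (cylSurface H) := by
  rw [cylSurface_eq_re_add_im]
  exact (reCLM.contDiff.smul contDiff_const).add
    ((contDiff_circleNormal.comp (contDiff_const.mul imCLM.contDiff)).const_smul _)

lemma px_cylSurface (H : ℝ) (z : ℂ) : px (cylSurface H) z = (-(2 / H : ℂ)) • e1 := by
  rw [cylSurface_eq_re_add_im]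
  refine (px_re_add_im ((hasDerivAt_id z.re).smul_const _)
    (hasDerivAt_const_smul_comp_mul_left (hasDerivAt_circleNormal _) _)).trans ?_
  rw [one_smul]

lemma py_cylSurface (H : ℝ) (z : ℂ) :
    py (cylSurface H) z = (-(2 / H : ℂ)) • circleTangent (4 * z.im) := by
  rw [cylSurface_eq_re_add_im]
  refine (py_re_add_im ((hasDerivAt_id z.re).smul_const _)
    (hasDerivAt_const_smul_comp_mul_left (hasDerivAt_circleNormal _) _)).trans ?_
  congr 1
  push_cast
  ring

lemma px_px_cylSurface (H : ℝ) (z : ℂ) : px (px (cylSurface H)) z = 0 := by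
  rw [funext (px_cylSurface H), px, fderiv_const_apply, _root_.zero_apply]

lemma py_py_cylSurface (H : ℝ) (z : ℂ) :
    py (py (cylSurface H)) z = (8 / H : ℂ) • circleNormal (4 * z.im) := by
  have hpy : py (cylSurface H) = fun w => 0 + (-(2 / H : ℂ)) • circleTangent (4 * w.im) := by
    simpa only [zero_add] using funext (py_cylSurface H)
  rw [hpy]
  refine (py_re_add_im (hasDerivAt_const z.re 0)
    (hasDerivAt_const_smul_comp_mul_left (hasDerivAt_circleTangent _) _)).trans ?_
  rw [smul_neg, ← neg_smul]
  congr 1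
  push_cast
  ring

end Surface

section AdaptedFrame

/-- The constant rotation correcting `F̂(z,1)` to a frame whose first two vectors are positive
multiples of the partial derivatives of the surface. These are multiples of `F̂ e₁ F̂⁻¹` and
`F̂ e₂ F̂⁻¹` by `-2/H`, so for `H > 0` both vectors have to be reversed, which is a half-turn about
`e₃`. -/
def cylOrientation (H : ℝ) : M2 := if H < 0 then 1 else e3

/-- The frame adapted to `cylSurface H`. -/
def cylFrame (H : ℝ) (z : ℂ) : M2 := cylF z 1 * cylOrientation H

lemma e3_mem_specialUnitaryGroup : e3 ∈ specialUnitaryGroup (Fin 2) ℂ := by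
  rw [mem_specialUnitaryGroup_iff_conjTranspose_mul_self]
  constructor
  · ext i j
    fin_cases i <;> fin_cases j <;> simp [e3, mul_apply]
  · simp [e3]

lemma cylOrientation_mem_specialUnitaryGroup (H : ℝ) :
    cylOrientation H ∈ specialUnitaryGroup (Fin 2) ℂ := by
  unfold cylOrientation
  split_ifs
  exacts [one_mem _, e3_mem_specialUnitaryGroup]

lemma cylFrame_mem_specialUnitaryGroup (H : ℝ) (z : ℂ) :
    cylFrame H z ∈ specialUnitaryGroup (Fin 2) ℂ :=
  mul_mem (cylF_mem_specialUnitaryGroup z norm_one) (cylOrientation_mem_specialUnitaryGroup H)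

lemma isUnit_det_cylOrientation (H : ℝ) : IsUnit (cylOrientation H).det := by
  rw [(mem_specialUnitaryGroup_iff.mp (cylOrientation_mem_specialUnitaryGroup H)).2]
  exact isUnit_one

lemma semiconjBy_e3_e1 : SemiconjBy e3 e1 (-e1) := by
  simp [SemiconjBy, e1, e3]

lemma semiconjBy_e3_e2 : SemiconjBy e3 e2 (-e2) := by
  simp [SemiconjBy, e2, e3]

lemma cylOrientation_conj_of_semiconjBy_neg {H : ℝ} (hH : H ≠ 0) {X : M2}
    (hX : SemiconjBy e3 X (-X)) :
    cylOrientation H * X * (cylOrientation H)⁻¹ = (-(|H| / H) : ℂ) • X := by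
  refine mul_mul_inv_of_semiconjBy (isUnit_det_cylOrientation H) ?_
  have hHC : (H : ℂ) ≠ 0 := ofReal_ne_zero.mpr hH
  rcases hH.lt_or_gt with hneg | hpos
  · have hsign : (-(|H| / H) : ℂ) = 1 := by
      rw [abs_of_neg hneg]; push_cast; field_simp
    rw [cylOrientation, if_pos hneg, hsign, one_smul]
    exact SemiconjBy.one_left X
  · have hsign : (-(|H| / H) : ℂ) = -1 := by
      rw [abs_of_pos hpos]; field_simp
    rwa [cylOrientation, if_neg hpos.not_gt, hsign, neg_one_smul]

lemma cylOrientation_conj_e3 (H : ℝ) : cylOrientation H * e3 * (cylOrientation H)⁻¹ = e3 := by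
  refine mul_mul_inv_of_semiconjBy (isUnit_det_cylOrientation H) ?_
  unfold cylOrientation
  split_ifs
  exacts [SemiconjBy.one_left e3, Commute.refl e3]

lemma contDiff_cylFrame (H : ℝ) {n : WithTop ℕ∞} : ContDiff ℝ n (cylFrame H) := by
  have hconj : ContDiff ℝ n (starRingEnd ℂ) := conjCLE.contDiff
  have hphase : ContDiff ℝ n fun z : ℂ => (z * 1⁻¹ - (starRingEnd ℂ) z * 1) • cylA := by
    fun_prop
  exact (contDiff_normedSpace_exp.comp hphase).mul contDiff_const

lemma cylFrame_conj_e1 {H : ℝ} (hH : H ≠ 0) (z : ℂ) :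
    cylFrame H z * e1 * (cylFrame H z)⁻¹ = (|H| / 2 : ℂ) • px (cylSurface H) z := by
  rw [cylFrame, mul_conj_eq_conj_conj, cylOrientation_conj_of_semiconjBy_neg hH semiconjBy_e3_e1,
    mul_smul_comm, smul_mul_assoc, cylF_one_conj_e1, px_cylSurface, smul_smul]
  congr 1
  ring

lemma cylFrame_conj_e2 {H : ℝ} (hH : H ≠ 0) (z : ℂ) :
    cylFrame H z * e2 * (cylFrame H z)⁻¹ = (|H| / 2 : ℂ) • py (cylSurface H) z := by
  rw [cylFrame, mul_conj_eq_conj_conj, cylOrientation_conj_of_semiconjBy_neg hH semiconjBy_e3_e2,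
    mul_smul_comm, smul_mul_assoc, cylF_one_conj_e2, py_cylSurface, smul_smul]
  congr 1
  ring

lemma cylFrame_conj_e3 (H : ℝ) (z : ℂ) :
    cylFrame H z * e3 * (cylFrame H z)⁻¹ = circleNormal (4 * z.im) := by
  rw [cylFrame, mul_conj_eq_conj_conj, cylOrientation_conj_e3, cylF_one_conj_e3]

end AdaptedFrame

section Geometry

lemma exp_neg_log_abs {x : ℝ} (hx : x ≠ 0) : Real.exp (-Real.log |x|) = |x|⁻¹ := by
  rw [Real.exp_neg, Real.exp_log (abs_pos.mpr hx)]

lemma exp_two_mul_neg_log_abs {x : ℝ} (hx : x ≠ 0) :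
    Real.exp (2 * -Real.log |x|) = (x ^ 2)⁻¹ := by
  rw [two_mul, Real.exp_add, exp_neg_log_abs hx, ← mul_inv, abs_mul_abs_self, sq]

lemma ip_px_px_cylSurface (H : ℝ) (z : ℂ) :
    ip (px (cylSurface H) z) (px (cylSurface H) z) = 4 / (H : ℂ) ^ 2 := by
  rw [px_cylSurface, ip_smul_left, ip_smul_right, ip_e1_e1]
  ring

lemma ip_py_py_cylSurface (H : ℝ) (z : ℂ) :
    ip (py (cylSurface H) z) (py (cylSurface H) z) = 4 / (H : ℂ) ^ 2 := by
  rw [py_cylSurface, ip_smul_left, ip_smul_right, ← cylF_one_conj_e2,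
    ip_conj (isUnit_det_cylF z 1), ip_e2_e2]
  ring

lemma ip_px_py_cylSurface (H : ℝ) (z : ℂ) :
    ip (px (cylSurface H) z) (py (cylSurface H) z) = 0 := by
  rw [px_cylSurface, py_cylSurface, ip_smul_left, ip_smul_right, ← cylF_one_conj_e1 z,
    ← cylF_one_conj_e2, ip_conj (isUnit_det_cylF z 1), ip_e1_e2, mul_zero, mul_zero]

lemma ip_laplacian_cylSurface_cylFrame (H : ℝ) (z : ℂ) :
    ip (px (px (cylSurface H)) z + py (py (cylSurface H)) z)
      (cylFrame H z * e3 * (cylFrame H z)⁻¹) = 8 / H := by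
  rw [px_px_cylSurface, zero_add, py_py_cylSurface, cylFrame_conj_e3, ip_smul_left,
    ← cylF_one_conj_e3, ip_conj (isUnit_det_cylF z 1), ip_e3_e3, mul_one]

end Geometry

/-- explicit Iwasawa factorization and Sym–Bobenko formula for the
cylinder: `exp(zλ⁻¹A) = F̂ B̂` on the unit circle, `F̂ ∈ SU(2)`, `B̂` is entire in `λ`
with `B̂(z,0) = I`, and `S₁(F̂(z,·)) = -(1/(2H))(4x e₁ + sin(4y) e₂ + cos(4y) e₃)`,
a conformally immersed round cylinder of constant mean curvature `H`. -/
theorem cylinder_example (H : ℝ) (hH : H ≠ 0) :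
    (∀ z l : ℂ, ‖l‖ = 1 →
      NormedSpace.exp ((z * l⁻¹) • cylA) = cylF z l * cylB z l) ∧
    (∀ z l : ℂ, ‖l‖ = 1 → (cylF z l)ᴴ * cylF z l = 1 ∧ (cylF z l).det = 1) ∧
    (∀ z : ℂ, Differentiable ℂ (fun l => cylB z l) ∧ cylB z 0 = 1) ∧
    (∀ z : ℂ, symB H (cylF z) 1 = (-(2 * (H : ℂ))⁻¹) •
      (((4 * z.re : ℝ) : ℂ) • e1 + ((Real.sin (4 * z.im) : ℝ) : ℂ) • e2 +
        ((Real.cos (4 * z.im) : ℝ) : ℂ) • e3)) ∧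
    (ContDiff ℝ (⊤ : ℕ∞) (fun z : ℂ => symB H (cylF z) 1) ∧
      (∀ z : ℂ, ((symB H (cylF z) 1)ᴴ = -(symB H (cylF z) 1) ∧
        (symB H (cylF z) 1).trace = 0)) ∧
      ∃ u : ℂ → ℝ, ContDiff ℝ (⊤ : ℕ∞) u ∧
        (∀ z : ℂ,
          ip (px (fun w => symB H (cylF w) 1) z) (px (fun w => symB H (cylF w) 1) z)
            = ((4 * Real.exp (2 * u z) : ℝ) : ℂ) ∧
          ip (py (fun w => symB H (cylF w) 1) z) (py (fun w => symB H (cylF w) 1) z)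
            = ((4 * Real.exp (2 * u z) : ℝ) : ℂ) ∧
          ip (px (fun w => symB H (cylF w) 1) z) (py (fun w => symB H (cylF w) 1) z) = 0) ∧
        ∃ F : ℂ → M2, ContDiff ℝ (⊤ : ℕ∞) F ∧
          ∀ z : ℂ, (F z)ᴴ * F z = 1 ∧ (F z).det = 1 ∧
            F z * e1 * (F z)⁻¹
              = (((2 * Real.exp (u z))⁻¹ : ℝ) : ℂ) • px (fun w => symB H (cylF w) 1) z ∧
            F z * e2 * (F z)⁻¹
              = (((2 * Real.exp (u z))⁻¹ : ℝ) : ℂ) • py (fun w => symB H (cylF w) 1) z ∧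
            ip (px (px (fun w => symB H (cylF w) 1)) z +
                py (py (fun w => symB H (cylF w) 1)) z) (F z * e3 * (F z)⁻¹)
              = ((8 * Real.exp (2 * u z) * H : ℝ) : ℂ)) := by
  have hmetric : 4 / (H : ℂ) ^ 2 = (4 * Real.exp (2 * -Real.log |H|) : ℝ) := by
    rw [exp_two_mul_neg_log_abs hH]; push_cast; rfl
  have hscale : (|H| / 2 : ℂ) = ((2 * Real.exp (-Real.log |H|))⁻¹ : ℝ) := by
    rw [exp_neg_log_abs hH]; push_cast; rw [_root_.mul_inv_rev, inv_inv]; rfl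
  have hmean : (8 / H : ℂ) = (8 * Real.exp (2 * -Real.log |H|) * H : ℝ) := by
    rw [exp_two_mul_neg_log_abs hH, ← ofReal_ofNat, ← ofReal_div]; congr 1; field_simp
  exact ⟨fun z l _ => exp_smul_cylA_eq_cylF_mul_cylB z l,
    fun z l hl => mem_specialUnitaryGroup_iff_conjTranspose_mul_self.mp
      (cylF_mem_specialUnitaryGroup z hl),
    fun z => ⟨differentiable_cylB z, cylB_zero z⟩,
    symB_cylF_one H,
    contDiff_cylSurface H,
    fun z => ⟨conjTranspose_cylSurface H z, trace_cylSurface H z⟩,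
    fun _ => -Real.log |H|, contDiff_const,
    fun z => ⟨(ip_px_px_cylSurface H z).trans hmetric, (ip_py_py_cylSurface H z).trans hmetric,
      ip_px_py_cylSurface H z⟩,
    cylFrame H, contDiff_cylFrame H, fun z =>
      have ⟨hunitary, hdet⟩ := mem_specialUnitaryGroup_iff_conjTranspose_mul_self.mp
        (cylFrame_mem_specialUnitaryGroup H z)
      ⟨hunitary, hdet, hscale ▸ cylFrame_conj_e1 hH z, hscale ▸ cylFrame_conj_e2 hH z,
        (ip_laplacian_cylSurface_cylFrame H z).trans hmean⟩⟩
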